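/- Let u : ℝ² → ℝ be a smooth function of (x,t) satisfying the mKdV equation u_t + u_xxx − 6u²u_x = 0, and let k = 1 or k = −1. Then the function m := u² + k·u_x satisfies the KdV equation m_t + m_xxx − 6m·m_x = 0. -/

import Mathlib

noncomputable section

/-- Partial derivative of `f` with respect to its first argument. -/
def d1 (f : ℝ → ℝ → ℝ) : ℝ → ℝ → ℝ := fun a b => deriv (fun a' => f a' b) a

/-- Partial derivative of `f` with respect to its second argument. -/
def d2 (f : ℝ → ℝ → ℝ) : ℝ → ℝ → ℝ := fun a b => deriv (fun b' => f a b') b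

/-- Smoothness of a two-variable real function. -/
def Smooth2 (f : ℝ → ℝ → ℝ) : Prop := ContDiff ℝ (⊤ : ℕ∞) (fun p : ℝ × ℝ => f p.1 p.2)

/-!
Writing `KdV(m) = m_t + m_xxx - 6 m m_x` and `mKdV(u) = u_t + u_xxx - 6 u² u_x`, Miura's identity
`KdV(u² + k u_x) = (2u + k ∂ₓ) mKdV(u) + 6 (1 - k²) u_x u_xx`
holds for every `C⁴` function `u` and real `k`. If `k² = 1` the last term vanishes, so
`mKdV(u) = 0` forces `KdV(u² + k u_x) = 0`.
-/

section PartialDerivatives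

variable {f : ℝ → ℝ → ℝ}

theorem hasDerivAt_fst_of_differentiableAt {a b : ℝ} (hf : DifferentiableAt ℝ ↿f (a, b)) :
    HasDerivAt (fun a' => f a' b) (fderiv ℝ ↿f (a, b) (1, 0)) a :=
  hf.hasFDerivAt.comp_hasDerivAt (f := fun a' => (a', b)) a
    ((hasDerivAt_id a).prodMk (hasDerivAt_const a b))

theorem hasDerivAt_snd_of_differentiableAt {a b : ℝ} (hf : DifferentiableAt ℝ ↿f (a, b)) :
    HasDerivAt (fun b' => f a b') (fderiv ℝ ↿f (a, b) (0, 1)) b :=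
  hf.hasFDerivAt.comp_hasDerivAt (f := fun b' => (a, b')) b
    ((hasDerivAt_const b a).prodMk (hasDerivAt_id b))

theorem hasDerivAt_d1 (hf : Differentiable ℝ ↿f) (a b : ℝ) :
    HasDerivAt (fun a' => f a' b) (d1 f a b) a :=
  (hasDerivAt_fst_of_differentiableAt (hf (a, b))).differentiableAt.hasDerivAt

theorem hasDerivAt_d2 (hf : Differentiable ℝ ↿f) (a b : ℝ) :
    HasDerivAt (fun b' => f a b') (d2 f a b) b :=
  (hasDerivAt_snd_of_differentiableAt (hf (a, b))).differentiableAt.hasDerivAt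

theorem uncurry_d1_eq_fderiv (hf : Differentiable ℝ ↿f) :
    ↿(d1 f) = fun p => fderiv ℝ ↿f p (1, 0) :=
  funext fun p => (hasDerivAt_fst_of_differentiableAt (hf p)).deriv

theorem uncurry_d2_eq_fderiv (hf : Differentiable ℝ ↿f) :
    ↿(d2 f) = fun p => fderiv ℝ ↿f p (0, 1) :=
  funext fun p => (hasDerivAt_snd_of_differentiableAt (hf p)).deriv

theorem d1_zero : d1 0 = 0 :=
  funext₂ fun a _ => deriv_const a 0

theorem contDiff_d1 {m n : WithTop ℕ∞} (hf : ContDiff ℝ n ↿f) (hmn : m + 1 ≤ n) :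
    ContDiff ℝ m ↿(d1 f) := by
  have hn : n ≠ 0 := (zero_lt_one.trans_le (le_add_self.trans hmn)).ne'
  rw [uncurry_d1_eq_fderiv (hf.differentiable hn)]
  exact (hf.fderiv_right hmn).clm_apply contDiff_const

theorem contDiff_d2 {m n : WithTop ℕ∞} (hf : ContDiff ℝ n ↿f) (hmn : m + 1 ≤ n) :
    ContDiff ℝ m ↿(d2 f) := by
  have hn : n ≠ 0 := (zero_lt_one.trans_le (le_add_self.trans hmn)).ne'
  rw [uncurry_d2_eq_fderiv (hf.differentiable hn)]
  exact (hf.fderiv_right hmn).clm_apply contDiff_const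

theorem d2_d1_eq_d1_d2 (hf : ContDiff ℝ 2 ↿f) : d2 (d1 f) = d1 (d2 f) := by
  funext a b
  have hdiff : Differentiable ℝ ↿f := hf.differentiable two_ne_zero
  have hd1 : Differentiable ℝ ↿(d1 f) :=
    (contDiff_d1 hf one_add_one_eq_two.le).differentiable one_ne_zero
  have hd2 : Differentiable ℝ ↿(d2 f) :=
    (contDiff_d2 hf one_add_one_eq_two.le).differentiable one_ne_zero
  have hfderiv : DifferentiableAt ℝ (fderiv ℝ ↿f) (a, b) :=
    (hf.fderiv_right one_add_one_eq_two.le).differentiable one_ne_zero (a, b)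
  have hsymm : IsSymmSndFDerivAt ℝ ↿f (a, b) :=
    hf.contDiffAt.isSymmSndFDerivAt minSmoothness_of_isRCLikeNormedField.le
  calc d2 (d1 f) a b
      = fderiv ℝ ↿(d1 f) (a, b) (0, 1) := congr_fun (uncurry_d2_eq_fderiv hd1) (a, b)
    _ = fderiv ℝ (fderiv ℝ ↿f) (a, b) (0, 1) (1, 0) := by
      rw [uncurry_d1_eq_fderiv hdiff]
      simp [fderiv_clm_apply hfderiv (differentiableAt_const _)]
    _ = fderiv ℝ (fderiv ℝ ↿f) (a, b) (1, 0) (0, 1) := hsymm (0, 1) (1, 0)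
    _ = fderiv ℝ ↿(d2 f) (a, b) (1, 0) := by
      rw [uncurry_d2_eq_fderiv hdiff]
      simp [fderiv_clm_apply hfderiv (differentiableAt_const _)]
    _ = d1 (d2 f) a b := (congr_fun (uncurry_d1_eq_fderiv hd2) (a, b)).symm

end PartialDerivatives

/-- The left-hand side `m_t + m_xxx - 6 m m_x` of the KdV equation; the first argument of `m` is the
space variable `x`, the second is the time `t`. -/
def kdvOperator (m : ℝ → ℝ → ℝ) : ℝ → ℝ → ℝ := fun x t =>
  d2 m x t + d1 (d1 (d1 m)) x t - 6 * m x t * d1 m x t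

/-- The left-hand side `u_t + u_xxx - 6 u² u_x` of the modified KdV equation, with the arguments of
`u` ordered as in `kdvOperator`. -/
def mkdvOperator (u : ℝ → ℝ → ℝ) : ℝ → ℝ → ℝ := fun x t =>
  d2 u x t + d1 (d1 (d1 u)) x t - 6 * (u x t) ^ 2 * d1 u x t

/-- The Miura transform `u² + k u_x` of `u`, for an arbitrary real coefficient `k`. -/
def miura (k : ℝ) (u : ℝ → ℝ → ℝ) : ℝ → ℝ → ℝ := fun x t =>
  (u x t) ^ 2 + k * d1 u x t

section Miura

variable {u : ℝ → ℝ → ℝ}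

theorem d2_miura (k : ℝ) (hu : ContDiff ℝ 2 ↿u) :
    d2 (miura k u) = fun x t => 2 * u x t * d2 u x t + k * d1 (d2 u) x t := by
  have hu₁ : ContDiff ℝ 1 ↿(d1 u) := contDiff_d1 hu one_add_one_eq_two.le
  funext x t
  have ht := hasDerivAt_d2 (hu.differentiable two_ne_zero) x t
  have hxt := hasDerivAt_d2 (hu₁.differentiable one_ne_zero) x t
  rw [← d2_d1_eq_d1_d2 hu]
  exact (((ht.pow 2).add (hxt.const_mul k)).congr_deriv (by ring)).deriv

theorem d1_miura (k : ℝ) (hu : ContDiff ℝ 2 ↿u) :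
    d1 (miura k u) = fun x t => 2 * u x t * d1 u x t + k * d1 (d1 u) x t := by
  have hu₁ : ContDiff ℝ 1 ↿(d1 u) := contDiff_d1 hu one_add_one_eq_two.le
  funext x t
  have hx := hasDerivAt_d1 (hu.differentiable two_ne_zero) x t
  have hxx := hasDerivAt_d1 (hu₁.differentiable one_ne_zero) x t
  exact (((hx.pow 2).add (hxx.const_mul k)).congr_deriv (by ring)).deriv

theorem d1_d1_miura (k : ℝ) (hu : ContDiff ℝ 3 ↿u) :
    d1 (d1 (miura k u)) = fun x t =>
      2 * d1 u x t ^ 2 + 2 * u x t * d1 (d1 u) x t + k * d1 (d1 (d1 u)) x t := by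
  have hu₁ : ContDiff ℝ 2 ↿(d1 u) := contDiff_d1 hu two_add_one_eq_three.le
  have hu₂ : ContDiff ℝ 1 ↿(d1 (d1 u)) := contDiff_d1 hu₁ one_add_one_eq_two.le
  rw [d1_miura k (hu.of_le (by norm_num))]
  funext x t
  have hx := hasDerivAt_d1 (hu.differentiable three_ne_zero) x t
  have hxx := hasDerivAt_d1 (hu₁.differentiable two_ne_zero) x t
  have hxxx := hasDerivAt_d1 (hu₂.differentiable one_ne_zero) x t
  exact ((((hx.const_mul 2).mul hxx).add (hxxx.const_mul k)).congr_deriv (by ring)).deriv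

theorem d1_d1_d1_miura (k : ℝ) (hu : ContDiff ℝ 4 ↿u) :
    d1 (d1 (d1 (miura k u))) = fun x t =>
      6 * d1 u x t * d1 (d1 u) x t + 2 * u x t * d1 (d1 (d1 u)) x t
        + k * d1 (d1 (d1 (d1 u))) x t := by
  have hu₁ : ContDiff ℝ 3 ↿(d1 u) := contDiff_d1 hu three_add_one_eq_four.le
  have hu₂ : ContDiff ℝ 2 ↿(d1 (d1 u)) := contDiff_d1 hu₁ two_add_one_eq_three.le
  have hu₃ : ContDiff ℝ 1 ↿(d1 (d1 (d1 u))) := contDiff_d1 hu₂ one_add_one_eq_two.le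
  rw [d1_d1_miura k (hu.of_le (by norm_num))]
  funext x t
  have hx := hasDerivAt_d1 (hu.differentiable four_ne_zero) x t
  have hxx := hasDerivAt_d1 (hu₁.differentiable three_ne_zero) x t
  have hxxx := hasDerivAt_d1 (hu₂.differentiable two_ne_zero) x t
  have hxxxx := hasDerivAt_d1 (hu₃.differentiable one_ne_zero) x t
  exact (((((hxx.pow 2).const_mul 2).add ((hx.const_mul 2).mul hxxx)).add
    (hxxxx.const_mul k)).congr_deriv (by ring)).deriv

theorem d1_mkdvOperator (hu : ContDiff ℝ 4 ↿u) :
    d1 (mkdvOperator u) = fun x t =>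
      d1 (d2 u) x t + d1 (d1 (d1 (d1 u))) x t
        - (12 * u x t * d1 u x t ^ 2 + 6 * u x t ^ 2 * d1 (d1 u) x t) := by
  have hut : ContDiff ℝ 3 ↿(d2 u) := contDiff_d2 hu three_add_one_eq_four.le
  have hu₁ : ContDiff ℝ 3 ↿(d1 u) := contDiff_d1 hu three_add_one_eq_four.le
  have hu₂ : ContDiff ℝ 2 ↿(d1 (d1 u)) := contDiff_d1 hu₁ two_add_one_eq_three.le
  have hu₃ : ContDiff ℝ 1 ↿(d1 (d1 (d1 u))) := contDiff_d1 hu₂ one_add_one_eq_two.le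
  funext x t
  have htx := hasDerivAt_d1 (hut.differentiable three_ne_zero) x t
  have hx := hasDerivAt_d1 (hu.differentiable four_ne_zero) x t
  have hxx := hasDerivAt_d1 (hu₁.differentiable three_ne_zero) x t
  have hxxxx := hasDerivAt_d1 (hu₃.differentiable one_ne_zero) x t
  exact (((htx.add hxxxx).sub (((hx.pow 2).const_mul 6).mul hxx)).congr_deriv
    (by simp only [Pi.pow_apply]; ring)).deriv

theorem kdvOperator_miura (k : ℝ) (hu : ContDiff ℝ 4 ↿u) (x t : ℝ) :
    kdvOperator (miura k u) x t =
      2 * u x t * mkdvOperator u x t + k * d1 (mkdvOperator u) x t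
        + 6 * (1 - k ^ 2) * d1 u x t * d1 (d1 u) x t := by
  have hu2 : ContDiff ℝ 2 ↿u := hu.of_le (by norm_num)
  rw [kdvOperator, d2_miura k hu2, d1_d1_d1_miura k hu, d1_miura k hu2, d1_mkdvOperator hu]
  simp only [miura, mkdvOperator]
  ring

theorem miura_maps_mKdV_to_KdV_general {k : ℝ} (hu : ContDiff ℝ 4 ↿u) (hk : k = 1 ∨ k = -1)
    (hmKdV : mkdvOperator u = 0) : kdvOperator (miura k u) = 0 := by
  funext x t
  rw [kdvOperator_miura k hu, hmKdV, d1_zero, sq_eq_one_iff.mpr hk]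
  simp

end Miura

/-- the Miura transformation `m = u² + k·u_x` maps solutions of mKdV
to solutions of KdV. -/
theorem miura_maps_mKdV_to_KdV (u : ℝ → ℝ → ℝ) (k : ℝ)
    (hu : Smooth2 u) (hk : k = 1 ∨ k = -1)
    (hmKdV : ∀ x t, d2 u x t + d1 (d1 (d1 u)) x t - 6 * (u x t) ^ 2 * d1 u x t = 0) :
    ∀ x t,
      d2 (fun x t => (u x t) ^ 2 + k * d1 u x t) x t
        + d1 (d1 (d1 (fun x t => (u x t) ^ 2 + k * d1 u x t))) x t
        - 6 * ((u x t) ^ 2 + k * d1 u x t)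
          * d1 (fun x t => (u x t) ^ 2 + k * d1 u x t) x t = 0 := by
  have hu4 : ContDiff ℝ 4 ↿u := ContDiff.of_le hu (WithTop.coe_le_coe.mpr le_top)
  exact congr_fun₂ (miura_maps_mKdV_to_KdV_general hu4 hk (funext₂ hmKdV))
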